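/- Let A be a reduced commutative ring, B an A-algebra of finite type, and M a finitely generated B-module. If f = 0 is the only element f of A such that (1) B[f⁻¹] and M[f⁻¹] are free as A[f⁻¹]-modules, (2) B[f⁻¹] is of finite presentation as an A[f⁻¹]-algebra, and (3) M[f⁻¹] is finitely presented as a B[f⁻¹]-module, then 1 = 0 in A. -/

import Mathlib

namespace GenericFreeness

theorem exists_finset_basis {σ : Type*} {r : σ → σ → Prop} (hr : WellQuasiOrdered r) (L : Set σ) :
    ∃ S : Finset σ, (∀ s ∈ S, s ∈ L) ∧ ∀ μ ∈ L, ∃ s ∈ S, r s μ := by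
  by_contra! hcon
  obtain ⟨u, -, hu⟩ := exists_seq_of_forall_finset_exists (· ∈ L) (fun a b => ¬ r a b) hcon
  obtain ⟨m, n, hmn, h⟩ := hr u
  exact hu m n hmn h

section LeadingSet

variable {A σ Γ : Type*} [CommRing A] [LinearOrder σ]

/-- The positions at which an element of `N` has a power of `f` as its leading coefficient. -/
def leadingSet (N : Submodule A (σ →₀ A)) (f : A) : Set σ :=
  {μ | ∃ k : ℕ, ∃ p ∈ N, p μ = f ^ k ∧ ∀ ν, μ < ν → p ν = 0}

/-- `f` is stable for `N` if no further nonzero multiple of `f` enlarges the leading set. -/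
def IsStable (N : Submodule A (σ →₀ A)) (f : A) : Prop :=
  ∀ c, f * c ≠ 0 → leadingSet N (f * c) ⊆ leadingSet N f

theorem leadingSet_mono (N : Submodule A (σ →₀ A)) {f g : A} (h : f ∣ g) :
    leadingSet N f ⊆ leadingSet N g := by
  obtain ⟨d, rfl⟩ := h
  rintro μ ⟨k, p, hp, hk, hlt⟩
  refine ⟨k, d ^ k • p, N.smul_mem _ hp, ?_, fun ν hν => ?_⟩
  · simp [hk, mul_pow, mul_comm]
  · simp [hlt ν hν]

theorem IsStable.mul {N : Submodule A (σ →₀ A)} {f : A} (h : IsStable N f) (d : A) :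
    IsStable N (f * d) := fun c hc => by
  rw [mul_assoc] at hc ⊢
  exact (h _ hc).trans (leadingSet_mono N (dvd_mul_right f d))

theorem shift_mem_leadingSet {N : Submodule A (σ →₀ A)} {s : σ → σ} (hs : StrictMono s)
    (hN : ∀ p ∈ N, p.mapDomain s ∈ N) {f : A} {μ : σ} (hμ : μ ∈ leadingSet N f) :
    s μ ∈ leadingSet N f := by
  obtain ⟨k, p, hp, hk, hlt⟩ := hμ
  refine ⟨k, p.mapDomain s, hN p hp, ?_, fun ν hν => ?_⟩
  · rw [Finsupp.mapDomain_apply hs.injective, hk]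
  · by_cases h : ν ∈ Set.range s
    · obtain ⟨ν, rfl⟩ := h
      rw [Finsupp.mapDomain_apply hs.injective, hlt ν (hs.lt_iff_lt.mp hν)]
    · exact Finsupp.mapDomain_of_notMem_range _ _ h

theorem exists_isStable {N : Submodule A (σ →₀ A)} {s : Γ → σ → σ}
    (hs : ∀ γ, StrictMono (s γ)) (hN : ∀ γ, ∀ p ∈ N, p.mapDomain (s γ) ∈ N)
    (hwqo : WellQuasiOrdered fun μ ν => ∃ γ, ν = s γ μ) {f : A} (hf : f ≠ 0) :
    ∃ d, f * d ≠ 0 ∧ IsStable N (f * d) := by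
  by_contra! hcon
  have key : ∀ g : {g : A // g ≠ 0 ∧ f ∣ g}, ∃ g' : {g : A // g ≠ 0 ∧ f ∣ g}, ∃ μ : σ,
      g.1 ∣ g'.1 ∧ μ ∈ leadingSet N g'.1 ∧ μ ∉ leadingSet N g.1 := by
    rintro ⟨_, hg, d, rfl⟩
    have := hcon d hg
    simp only [IsStable, not_forall, Set.not_subset] at this
    obtain ⟨c, hc, μ, hμ, hμ'⟩ := this
    exact ⟨⟨f * d * c, hc, dvd_mul_of_dvd_left (dvd_mul_right f d) c⟩, μ, dvd_mul_right _ c,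
      hμ, hμ'⟩
  choose F w hdvd hmem hnot using key
  let u : ℕ → {g : A // g ≠ 0 ∧ f ∣ g} := fun n => F^[n] ⟨f, hf, dvd_rfl⟩
  have hsucc (n : ℕ) : u (n + 1) = F (u n) := Function.iterate_succ_apply' F n _
  have hmono : ∀ m n, m ≤ n → (u m).1 ∣ (u n).1 := fun m n hmn => by
    induction n, hmn using Nat.le_induction with
    | base => exact dvd_rfl
    | succ n _ ih => exact ih.trans (hsucc n ▸ hdvd (u n))
  obtain ⟨m, n, hmn, γ, hγ⟩ := hwqo fun n => w (u n)
  apply hnot (u n)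
  rw [hγ]
  refine shift_mem_leadingSet (hs γ) (hN γ) (leadingSet_mono N (hmono (m + 1) n hmn) ?_)
  rw [hsucc]
  exact hmem (u m)

theorem smul_eq_zero_of_isStable {N : Submodule A (σ →₀ A)} {f : A} (h : IsStable N f)
    {p : σ →₀ A} (hp : p ∈ N) (hL : ∀ μ ∈ leadingSet N f, p μ = 0) : f • p = 0 := by
  by_contra hne
  have hsupp := Finsupp.support_nonempty_iff.mpr hne
  set μ := (f • p).support.max' hsupp with hμdef
  have hμ : (f • p) μ ≠ 0 := Finsupp.mem_support_iff.mp ((f • p).support.max'_mem hsupp)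
  have hμ' : f * p μ ≠ 0 := by simpa using hμ
  refine hμ' ?_
  rw [hL μ, mul_zero]
  refine h (p μ) hμ' ⟨1, f • p, N.smul_mem f hp, by simp, fun ν hν => ?_⟩
  by_contra hne'
  exact hν.not_ge ((f • p).support.le_max' ν (Finsupp.mem_support_iff.mpr hne'))

/-- Induction on the leading position of a finitely supported function. -/
theorem leading_induction [WellFoundedLT σ] {Q : (σ →₀ A) → Prop} (zero : Q 0)
    (step : ∀ p μ, (∀ ν, μ < ν → p ν = 0) → (∀ q, (∀ ν, μ ≤ ν → q ν = 0) → Q q) → Q p)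
    (p : σ →₀ A) : Q p := by
  have main : ∀ μ, ∀ q : σ →₀ A, (∀ ν, μ < ν → q ν = 0) → Q q := by
    intro μ
    induction μ using WellFoundedLT.induction with
    | _ μ ih =>
      refine fun q hq => step q μ hq fun r hr => ?_
      by_cases h0 : r = 0
      · exact h0 ▸ zero
      have hsupp := Finsupp.support_nonempty_iff.mpr h0
      refine ih (r.support.max' hsupp) ?_ r fun ν hν => ?_
      · by_contra! hle
        exact Finsupp.mem_support_iff.mp (r.support.max'_mem hsupp) (hr _ hle)
      · by_contra hne
        exact hν.not_ge (r.support.le_max' ν (Finsupp.mem_support_iff.mpr hne))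
  by_cases h0 : p = 0
  · exact h0 ▸ zero
  refine main (p.support.max' (Finsupp.support_nonempty_iff.mpr h0)) p fun ν hν => ?_
  by_contra hne
  exact hν.not_ge (p.support.le_max' ν (Finsupp.mem_support_iff.mpr hne))

theorem exists_reduction [WellFoundedLT σ] (N : Submodule A (σ →₀ A)) (f : A) (q : σ →₀ A) :
    ∃ k : ℕ, ∃ r : σ →₀ A, (∀ μ ∈ leadingSet N f, r μ = 0) ∧ f ^ k • q - r ∈ N := by
  induction q using leading_induction with
  | zero => exact ⟨0, 0, by simp, by simp⟩
  | step p μ hp ih =>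
    by_cases hμ : μ ∈ leadingSet N f
    · obtain ⟨k₀, g, hg, hk₀, hlt⟩ := hμ
      obtain ⟨k, r, hr, hmem⟩ := ih (f ^ k₀ • p - p μ • g) fun ν hν => by
        obtain rfl | hν := hν.eq_or_lt
        · simp [hk₀, mul_comm]
        · simp [hp ν hν, hlt ν hν]
      refine ⟨k + k₀, r, hr, ?_⟩
      have : f ^ (k + k₀) • p - r =
          (f ^ k • (f ^ k₀ • p - p μ • g) - r) + (f ^ k * p μ) • g := by
        rw [pow_add]; module
      rw [this]
      exact N.add_mem hmem (N.smul_mem _ hg)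
    · obtain ⟨k, r, hr, hmem⟩ := ih (p - Finsupp.single μ (p μ)) fun ν hν => by
        obtain rfl | hν := hν.eq_or_lt
        · simp
        · simp [hp ν hν, hν.ne]
      refine ⟨k, r + f ^ k • Finsupp.single μ (p μ), fun ν hν => ?_, ?_⟩
      · have : μ ≠ ν := fun h => hμ (h ▸ hν)
        simp [hr ν hν, this]
      · convert hmem using 1
        module

theorem exists_finset_generators [WellFoundedLT σ] {N : Submodule A (σ →₀ A)} {s : Γ → σ → σ}
    (hs : ∀ γ, StrictMono (s γ)) (hN : ∀ γ, ∀ p ∈ N, p.mapDomain (s γ) ∈ N)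
    (hwqo : WellQuasiOrdered fun μ ν => ∃ γ, ν = s γ μ) {f : A} (hf : IsStable N f) :
    ∃ G : Set (σ →₀ A), G.Finite ∧ G ⊆ N ∧ ∀ N₀ : Submodule A (σ →₀ A), G ⊆ N₀ →
      (∀ γ, ∀ p ∈ N₀, p.mapDomain (s γ) ∈ N₀) → ∀ p ∈ N, ∃ k : ℕ, f ^ k • p ∈ N₀ := by
  obtain ⟨S, hSL, hS⟩ := exists_finset_basis hwqo (leadingSet N f)
  have hSL' : ∀ t : S, t.1 ∈ leadingSet N f := fun t => hSL t.1 t.2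
  choose e g hgN hge hglt using hSL'
  refine ⟨Set.range g, Set.finite_range g, Set.range_subset_iff.mpr hgN, ?_⟩
  intro N₀ hG hN₀ p
  induction p using leading_induction with
  | zero => exact fun _ => ⟨0, by simp⟩
  | step p μ hp ih =>
    intro hpN
    by_cases hμ : μ ∈ leadingSet N f
    · obtain ⟨t, ht, γ, rfl⟩ := hS μ hμ
      set g' := (g ⟨t, ht⟩).mapDomain (s γ) with hg'
      have hg'N : g' ∈ N := hN γ _ (hgN _)
      have hg'N₀ : g' ∈ N₀ := hN₀ γ _ (hG ⟨_, rfl⟩)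
      have hg't : g' (s γ t) = f ^ e ⟨t, ht⟩ := by
        rw [hg', Finsupp.mapDomain_apply (hs γ).injective, hge]
      have hg'lt : ∀ ν, s γ t < ν → g' ν = 0 := fun ν hν => by
        by_cases h : ν ∈ Set.range (s γ)
        · obtain ⟨ν, rfl⟩ := h
          rw [hg', Finsupp.mapDomain_apply (hs γ).injective,
            hglt _ ν ((hs γ).lt_iff_lt.mp hν)]
        · exact Finsupp.mapDomain_of_notMem_range _ _ h
      obtain ⟨k, hk⟩ := ih (f ^ e ⟨t, ht⟩ • p - p (s γ t) • g') (fun ν hν => by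
        obtain rfl | hν := hν.eq_or_lt
        · simp [hg't, mul_comm]
        · simp [hp ν hν, hg'lt ν hν]) (N.sub_mem (N.smul_mem _ hpN) (N.smul_mem _ hg'N))
      refine ⟨k + e ⟨t, ht⟩, ?_⟩
      have : f ^ (k + e ⟨t, ht⟩) • p =
          f ^ k • (f ^ e ⟨t, ht⟩ • p - p (s γ t) • g') + (f ^ k * p (s γ t)) • g' := by
        rw [pow_add]; module
      rw [this]
      exact N₀.add_mem hk (N₀.smul_mem _ hg'N₀)
    · have hfp : f * p μ = 0 := by
        by_contra hne
        exact hμ (hf _ hne ⟨1, f • p, N.smul_mem f hpN, by simp, fun ν hν => by simp [hp ν hν]⟩)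
      obtain ⟨k, hk⟩ := ih (f • p) (fun ν hν => by
        obtain rfl | hν := hν.eq_or_lt
        · simp [hfp]
        · simp [hp ν hν]) (N.smul_mem _ hpN)
      exact ⟨k + 1, by rwa [pow_succ, mul_smul]⟩

end LeadingSet

section Localization

theorem isLocalizedModule_comp {R F M M' : Type*} [CommRing R] [AddCommGroup F] [Module R F]
    [AddCommGroup M] [Module R M] [AddCommGroup M'] [Module R M'] (f : R) (g : F →ₗ[R] M)
    (l : M →ₗ[R] M') [IsLocalizedModule (Submonoid.powers f) l]
    (hker : ∀ x, g x = 0 → ∃ k : ℕ, f ^ k • x = 0)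
    (hsurj : ∀ m, ∃ k : ℕ, ∃ x, f ^ k • m = g x) :
    IsLocalizedModule (Submonoid.powers f) (l ∘ₗ g) where
  map_units := IsLocalizedModule.map_units l
  surj y := by
    obtain ⟨⟨m, ⟨_, j, rfl⟩⟩, hm⟩ := IsLocalizedModule.surj (Submonoid.powers f) l y
    obtain ⟨k, x, hx⟩ := hsurj m
    refine ⟨⟨x, ⟨f ^ (k + j), k + j, rfl⟩⟩, ?_⟩
    simp only [Submonoid.smul_def] at hm ⊢
    rw [pow_add, mul_smul, hm, LinearMap.comp_apply, ← hx, map_smul]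
  exists_of_eq {x y} hxy := by
    obtain ⟨⟨_, j, rfl⟩, hj⟩ := IsLocalizedModule.exists_of_eq (S := Submonoid.powers f) (f := l) hxy
    simp only [Submonoid.smul_def] at hj
    obtain ⟨k, hk⟩ := hker (f ^ j • (x - y)) (by rw [smul_sub, map_sub, map_smul, map_smul, hj,
      sub_self])
    refine ⟨⟨f ^ (k + j), k + j, rfl⟩, ?_⟩
    rwa [← mul_smul, ← pow_add, smul_sub, sub_eq_zero] at hk

theorem finitePresentation_of_torsion_ker {R E M M' R' : Type*} [CommRing R] [AddCommGroup E]
    [Module R E] [Module.FinitePresentation R E] [AddCommGroup M] [Module R M] [AddCommGroup M']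
    [Module R M'] [CommRing R'] [Algebra R R'] [Module R' M'] [IsScalarTower R R' M'] (f : R)
    [IsLocalization.Away f R'] (g : E →ₗ[R] M) (hg : Function.Surjective g)
    (l : M →ₗ[R] M') [IsLocalizedModule (Submonoid.powers f) l] {K : Submodule R E} (hK : K.FG)
    (hle : K ≤ LinearMap.ker g) (htors : ∀ x ∈ LinearMap.ker g, ∃ k : ℕ, f ^ k • x ∈ K) :
    Module.FinitePresentation R' M' := by
  have : Module.FinitePresentation R (E ⧸ K) :=
    Module.finitePresentation_of_surjective K.mkQ K.mkQ_surjective (by rwa [K.ker_mkQ])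
  have : IsLocalizedModule (Submonoid.powers f) (l ∘ₗ K.liftQ g hle) := by
    refine isLocalizedModule_comp f _ l (fun x hx => ?_) fun m => ?_
    · obtain ⟨x, rfl⟩ := K.mkQ_surjective x
      obtain ⟨k, hk⟩ := htors x (by simpa using hx)
      exact ⟨k, by rwa [← map_smul, Submodule.mkQ_apply, Submodule.Quotient.mk_eq_zero]⟩
    · obtain ⟨x, rfl⟩ := hg m
      exact ⟨0, K.mkQ x, by simp⟩
  exact FinitePresentation.of_isBaseChange _
    (IsLocalizedModule.isBaseChange (Submonoid.powers f) R' (l ∘ₗ K.liftQ g hle))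

theorem algebra_finitePresentation_of_torsion_ker {A R B B' : Type*} [CommRing A] [CommRing R]
    [Algebra A R] [Algebra.FinitePresentation A R] [CommRing B] [Algebra A B] [CommRing B']
    [Algebra A B'] [Algebra B B'] [IsScalarTower A B B'] (f : A)
    [IsLocalization.Away (algebraMap A B f) B'] (φ : R →ₐ[A] B) (hφ : Function.Surjective φ)
    {I : Ideal R} (hI : I.FG) (hle : ∀ x ∈ I, φ x = 0)
    (htors : ∀ x, φ x = 0 → ∃ k : ℕ, f ^ k • x ∈ I) :
    Algebra.FinitePresentation A B' := by
  have : Algebra.FinitePresentation A (R ⧸ I) := Algebra.FinitePresentation.quotient hI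
  let ψ : (R ⧸ I) →ₐ[A] B := Ideal.Quotient.liftₐ I φ hle
  let χ : (R ⧸ I) →ₐ[A] B' := (IsScalarTower.toAlgHom A B B').comp ψ
  let : Algebra (R ⧸ I) B' := χ.toRingHom.toAlgebra
  have : IsScalarTower A (R ⧸ I) B' := IsScalarTower.of_algebraMap_eq fun a => (χ.commutes a).symm
  have : IsLocalization (Algebra.algebraMapSubmonoid B (Submonoid.powers f)) B' := by
    rw [Algebra.algebraMapSubmonoid_powers]; infer_instance
  have hloc : IsLocalizedModule (Submonoid.powers f)
      ((IsScalarTower.toAlgHom A B B').toLinearMap ∘ₗ ψ.toLinearMap) := by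
    refine isLocalizedModule_comp f _ _ (fun x hx => ?_) fun m => ?_
    · obtain ⟨x, rfl⟩ := Ideal.Quotient.mk_surjective x
      obtain ⟨k, hk⟩ := htors x hx
      exact ⟨k, Ideal.Quotient.eq_zero_iff_mem.mpr hk⟩
    · obtain ⟨x, rfl⟩ := hφ m
      exact ⟨0, Ideal.Quotient.mk I x, by rw [pow_zero, one_smul]; rfl⟩
  have hloc' : IsLocalization (Algebra.algebraMapSubmonoid (R ⧸ I) (Submonoid.powers f)) B' :=
    isLocalizedModule_iff_isLocalization.mp hloc
  rw [Algebra.algebraMapSubmonoid_powers] at hloc'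
  have : Algebra.FinitePresentation (R ⧸ I) B' :=
    IsLocalization.Away.finitePresentation (algebraMap A (R ⧸ I) f)
  exact Algebra.FinitePresentation.trans A (R ⧸ I) B'

theorem free_of_isStable {A σ M M' A' : Type*} [CommRing A] [LinearOrder σ] [WellFoundedLT σ]
    [AddCommGroup M] [Module A M] [AddCommGroup M'] [Module A M'] [CommRing A'] [Algebra A A']
    [Module A' M'] [IsScalarTower A A' M'] {f : A} [IsLocalization.Away f A']
    {Φ : (σ →₀ A) →ₗ[A] M} (hΦ : Function.Surjective Φ) (hf : IsStable (LinearMap.ker Φ) f)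
    (l : M →ₗ[A] M') [IsLocalizedModule (Submonoid.powers f) l] : Module.Free A' M' := by
  let L := leadingSet (LinearMap.ker Φ) f
  have : Module.Free A (Finsupp.supported A A Lᶜ) :=
    Module.Free.of_equiv (Finsupp.supportedEquivFinsupp (M := A) (R := A) Lᶜ).symm
  have hsupp (p : σ →₀ A) : p ∈ Finsupp.supported A A Lᶜ ↔ ∀ μ ∈ L, p μ = 0 := by
    rw [Finsupp.mem_supported']
    simp
  let g : Finsupp.supported A A Lᶜ →ₗ[A] M := Φ.domRestrict _
  have : IsLocalizedModule (Submonoid.powers f) (l ∘ₗ g) := by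
    refine isLocalizedModule_comp (F := Finsupp.supported A A Lᶜ) f g l (fun x hx => ⟨1, ?_⟩) fun m => ?_
    · ext1
      simpa using smul_eq_zero_of_isStable hf (p := x) hx ((hsupp _).mp x.2)
    · obtain ⟨q, rfl⟩ := hΦ m
      obtain ⟨k, r, hr, hmem⟩ := exists_reduction (LinearMap.ker Φ) f q
      refine ⟨k, ⟨r, (hsupp r).mpr hr⟩, ?_⟩
      rw [LinearMap.mem_ker, map_sub, map_smul, sub_eq_zero] at hmem
      exact hmem
  exact Module.free_of_isLocalizedModule (M := Finsupp.supported A A Lᶜ) (Submonoid.powers f)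
    (l ∘ₗ g)

end Localization

section Monomials

open MvPolynomial

/-- Monomials in `n` variables times one of `m` basis vectors, ordered lexicographically. -/
abbrev MonomialIndex (n m : ℕ) : Type := Fin m ×ₗ Lex (Fin n →₀ ℕ)

/-- Multiplication by a monomial. -/
noncomputable def shift {n m : ℕ} (γ : Fin n →₀ ℕ) (s : MonomialIndex n m) : MonomialIndex n m :=
  toLex ((ofLex s).1, toLex (γ + ofLex (ofLex s).2))

theorem strictMono_shift {n m : ℕ} (γ : Fin n →₀ ℕ) :
    StrictMono (shift γ : MonomialIndex n m → MonomialIndex n m) := by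
  intro s t hst
  rw [Prod.Lex.lt_iff] at hst ⊢
  refine hst.imp id fun h => ⟨h.1, ?_⟩
  exact add_lt_add_right (α := Lex (Fin n →₀ ℕ)) h.2 (toLex γ)

theorem wellQuasiOrdered_shift (n m : ℕ) :
    WellQuasiOrdered fun s t : MonomialIndex n m => ∃ γ, t = shift γ s := by
  have h1 : WellQuasiOrdered (Eq : Fin m → Fin m → Prop) := Finite.wellQuasiOrdered _
  have h2 : WellQuasiOrdered ((· ≤ ·) : (Fin n →₀ ℕ) → (Fin n →₀ ℕ) → Prop) :=
    wellQuasiOrdered_le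
  intro u
  obtain ⟨i, j, hij, heq, hle⟩ := (h1.prod h2) fun k => ((ofLex (u k)).1, ofLex (ofLex (u k)).2)
  refine ⟨i, j, hij, ofLex (ofLex (u j)).2 - ofLex (ofLex (u i)).2, ?_⟩
  refine Prod.ext heq.symm ?_
  exact (tsub_add_cancel_of_le hle).symm

variable {A B E E' : Type*} [CommRing A] [CommRing B] [Algebra A B] [AddCommGroup E] [Module A E]
  [Module B E] [IsScalarTower A B E] [AddCommGroup E'] [Module A E'] [Module B E']
  [IsScalarTower A B E'] {n m : ℕ}

/-- The `A`-linear map sending the monomial `x ^ α` at the `i`-th basis vector to `x ^ α • w i`. -/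
noncomputable def evalMonomials (x : Fin n → B) (w : Fin m → E) :
    (MonomialIndex n m →₀ A) →ₗ[A] E :=
  Finsupp.linearCombination A fun s : MonomialIndex n m =>
    aeval x (monomial (ofLex (ofLex s).2) (1 : A)) • w (ofLex s).1

theorem evalMonomials_shift (x : Fin n → B) (w : Fin m → E) (γ : Fin n →₀ ℕ)
    (p : MonomialIndex n m →₀ A) : evalMonomials x w (p.mapDomain (shift γ)) =
      aeval x (monomial γ (1 : A)) • evalMonomials x w p := by
  rw [evalMonomials, Finsupp.linearCombination_mapDomain, Finsupp.linearCombination_apply,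
    Finsupp.linearCombination_apply, Finsupp.smul_sum]
  refine Finsupp.sum_congr fun s _ => ?_
  have : (monomial (γ + ofLex (ofLex s).2)) (1 : A) =
      monomial γ 1 * monomial (ofLex (ofLex s).2) 1 := by
    rw [monomial_mul, one_mul]
  simp only [Function.comp_apply, shift, ofLex_toLex, this, map_mul, mul_smul]
  rw [smul_comm]

theorem map_evalMonomials (x : Fin n → B) (w : Fin m → E) (h : E →ₗ[B] E')
    (p : MonomialIndex n m →₀ A) :
    h (evalMonomials x w p) = evalMonomials x (h ∘ w) p := by
  refine (Finsupp.apply_linearCombination A (h.restrictScalars A) _ p).trans ?_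
  rw [evalMonomials]
  congr 2
  ext s
  exact map_smul h _ _

theorem mapDomain_shift_mem_ker (x : Fin n → B) (w : Fin m → E) (γ : Fin n →₀ ℕ)
    (p : MonomialIndex n m →₀ A) (hp : p ∈ LinearMap.ker (evalMonomials (A := A) x w)) :
    p.mapDomain (shift γ) ∈ LinearMap.ker (evalMonomials (A := A) x w) := by
  rw [LinearMap.mem_ker] at hp ⊢
  rw [evalMonomials_shift, hp, smul_zero]

theorem evalMonomials_surjective {x : Fin n → B}
    (hx : Function.Surjective (aeval (R := A) x)) {w : Fin m → E}
    (hw : Submodule.span B (Set.range w) = ⊤) :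
    Function.Surjective (evalMonomials (A := A) x w) := by
  have key (q : MvPolynomial (Fin n) A) (i : Fin m) :
      aeval x q • w i ∈ LinearMap.range (evalMonomials (A := A) x w) := by
    induction q using MvPolynomial.induction_on' with
    | monomial α a =>
      refine ⟨Finsupp.single (toLex (i, toLex α)) a, ?_⟩
      have : monomial α a = a • monomial α (1 : A) := by rw [smul_monomial, smul_eq_mul, mul_one]
      rw [evalMonomials, Finsupp.linearCombination_single, this, map_smul, smul_assoc]
      rfl
    | add p q hp hq =>
      rw [map_add, add_smul]
      exact Submodule.add_mem _ hp hq
  intro y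
  obtain ⟨c, rfl⟩ := (Submodule.mem_span_range_iff_exists_fun B).mp
    (hw ▸ Submodule.mem_top : y ∈ Submodule.span B (Set.range w))
  rw [← LinearMap.mem_range]
  refine Submodule.sum_mem _ fun i _ => ?_
  obtain ⟨q, hq⟩ := hx (c i)
  exact hq ▸ key q i

theorem evalMonomials_comp_surjective {x : Fin n → B}
    (hx : Function.Surjective (aeval (R := A) x)) {w : Fin m → E}
    (hw : Submodule.span B (Set.range w) = ⊤) {h : E →ₗ[B] E'} (hh : Function.Surjective h) :
    Function.Surjective (evalMonomials (A := A) x (h ∘ w)) := fun y => by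
  obtain ⟨z, rfl⟩ := hh y
  obtain ⟨p, rfl⟩ := evalMonomials_surjective hx hw z
  exact ⟨p, (map_evalMonomials x w h p).symm⟩

theorem exists_isStable_evalMonomials (x : Fin n → B) (w : Fin m → E) {f : A} (hf : f ≠ 0) :
    ∃ d, f * d ≠ 0 ∧ IsStable (LinearMap.ker (evalMonomials (A := A) x w)) (f * d) :=
  exists_isStable strictMono_shift (mapDomain_shift_mem_ker x w) (wellQuasiOrdered_shift n m) hf

/-- If `f` is stable for the presentation of `E` obtained from `h`, then the kernel of `h` is finitely
generated up to `f`-power torsion. -/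
theorem exists_fg_of_isStable {R : Type*} [CommRing R] [Algebra A R] [Module R E] [Module R E']
    [IsScalarTower A R E] [IsScalarTower A R E'] {x : Fin n → R}
    (hx : Function.Surjective (aeval (R := A) x)) {w : Fin m → E'}
    (hw : Submodule.span R (Set.range w) = ⊤) (h : E' →ₗ[R] E) {f : A}
    (hf : IsStable (LinearMap.ker (evalMonomials (A := A) x (h ∘ w))) f) :
    ∃ K : Submodule R E', K.FG ∧ K ≤ LinearMap.ker h ∧
      ∀ y ∈ LinearMap.ker h, ∃ k : ℕ, f ^ k • y ∈ K := by
  obtain ⟨G, hGfin, hGN, hG⟩ := exists_finset_generators strictMono_shift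
    (mapDomain_shift_mem_ker x (h ∘ w)) (wellQuasiOrdered_shift n m) hf
  refine ⟨Submodule.span R (evalMonomials (A := A) x w '' G),
    Submodule.fg_span (hGfin.image _), ?_, fun y hy => ?_⟩
  · rw [Submodule.span_le]
    rintro _ ⟨p, hp, rfl⟩
    rw [SetLike.mem_coe, LinearMap.mem_ker, map_evalMonomials]
    exact hGN hp
  · obtain ⟨p, rfl⟩ := evalMonomials_surjective hx hw y
    rw [LinearMap.mem_ker, map_evalMonomials] at hy
    obtain ⟨k, hk⟩ := hG (((Submodule.span R (evalMonomials (A := A) x w '' G)).restrictScalars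
      A).comap (evalMonomials (A := A) x w))
      (fun p hp => Submodule.subset_span ⟨p, hp, rfl⟩) (fun γ p hp => by
        simp only [Submodule.mem_comap, Submodule.restrictScalars_mem, evalMonomials_shift] at hp ⊢
        exact Submodule.smul_mem _ _ hp) p hy
    exact ⟨k, by simpa using hk⟩

end Monomials

end GenericFreeness

theorem generic_freeness (A : Type*) [CommRing A] [IsReduced A]
    (B : Type*) [CommRing B] [Algebra A B] [Algebra.FiniteType A B]
    (M : Type*) [AddCommGroup M] [Module B M] [Module.Finite B M]
    (h : ∀ f : A,
      letI φ : Localization.Away f →+* Localization.Away (algebraMap A B f) :=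
        IsLocalization.Away.map (Localization.Away f)
          (Localization.Away (algebraMap A B f)) (algebraMap A B) f
      letI : Algebra (Localization.Away f) (Localization.Away (algebraMap A B f)) :=
        φ.toAlgebra
      letI : Module (Localization.Away f)
          (LocalizedModule (Submonoid.powers (algebraMap A B f)) M) :=
        Module.compHom _ φ
      -- (1) B[f⁻¹] and M[f⁻¹] are free A[f⁻¹]-modules
      Module.Free (Localization.Away f) (Localization.Away (algebraMap A B f)) →
      Module.Free (Localization.Away f)
        (LocalizedModule (Submonoid.powers (algebraMap A B f)) M) →
      -- (2) B[f⁻¹] is of finite presentation as an A[f⁻¹]-algebra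
      Algebra.FinitePresentation (Localization.Away f)
        (Localization.Away (algebraMap A B f)) →
      -- (3) M[f⁻¹] is a finitely presented B[f⁻¹]-module
      Module.FinitePresentation (Localization.Away (algebraMap A B f))
        (LocalizedModule (Submonoid.powers (algebraMap A B f)) M) →
      f = 0) :
    (1 : A) = 0 := by
  by_contra hne
  let : Module A M := Module.compHom M (algebraMap A B)
  have : IsScalarTower A B M := IsScalarTower.of_algebraMap_smul fun _ _ => rfl
  obtain ⟨n, π, hπ⟩ := Algebra.FiniteType.iff_quotient_mvPolynomial''.mp ‹Algebra.FiniteType A B›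
  obtain ⟨m, g, hg⟩ := Module.Finite.exists_fin' B M
  let : Algebra (MvPolynomial (Fin n) A) B := π.toRingHom.toAlgebra
  have : IsScalarTower A (MvPolynomial (Fin n) A) B :=
    IsScalarTower.of_algebraMap_eq fun a => (π.commutes a).symm
  have hX : Function.Surjective
      (MvPolynomial.aeval (R := A) (MvPolynomial.X : Fin n → MvPolynomial (Fin n) A)) := by
    rw [MvPolynomial.aeval_X_left]
    exact Function.surjective_id
  have hx : Function.Surjective
      (MvPolynomial.aeval (R := A) fun i => π (MvPolynomial.X i)) := by
    convert! hπ
    exact (MvPolynomial.aeval_unique π).symm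
  let u : Fin 1 → MvPolynomial (Fin n) A := fun _ => 1
  have hu : Submodule.span (MvPolynomial (Fin n) A) (Set.range u) = ⊤ := by
    rw [Set.range_const]
    exact Ideal.span_singleton_one
  let w : Fin m → Fin m → B := Pi.basisFun B (Fin m)
  have hw : Submodule.span B (Set.range w) = ⊤ := (Pi.basisFun B (Fin m)).span_eq
  let ρ : MvPolynomial (Fin n) A →ₗ[MvPolynomial (Fin n) A] B := Algebra.linearMap _ B
  obtain ⟨d, hd, hBst⟩ := GenericFreeness.exists_isStable_evalMonomials
    (MvPolynomial.X : Fin n → MvPolynomial (Fin n) A) (ρ ∘ u) hne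
  obtain ⟨e, he, hMst⟩ := GenericFreeness.exists_isStable_evalMonomials
    (fun i => π (MvPolynomial.X i)) (g ∘ w) hd
  replace hBst := hBst.mul e
  generalize 1 * d * e = f at he hBst hMst
  let φ : Localization.Away f →+* Localization.Away (algebraMap A B f) :=
    IsLocalization.Away.map (Localization.Away f)
      (Localization.Away (algebraMap A B f)) (algebraMap A B) f
  let : Algebra (Localization.Away f) (Localization.Away (algebraMap A B f)) := φ.toAlgebra
  let : Module (Localization.Away f) (LocalizedModule (Submonoid.powers (algebraMap A B f)) M) :=
    Module.compHom _ φ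
  have hφ (a : A) : φ (algebraMap A _ a) = algebraMap B _ (algebraMap A B a) :=
    IsLocalization.map_eq _ a
  have : IsScalarTower A (Localization.Away f) (Localization.Away (algebraMap A B f)) :=
    IsScalarTower.of_algebraMap_eq fun a =>
      (IsScalarTower.algebraMap_apply A B _ a).trans (hφ a).symm
  have : IsScalarTower A (Localization.Away f)
      (LocalizedModule (Submonoid.powers (algebraMap A B f)) M) :=
    IsScalarTower.of_algebraMap_smul fun a y => by
      change φ (algebraMap A _ a) • y = a • y
      rw [hφ, algebraMap_smul, algebraMap_smul]
  have : IsLocalization (Algebra.algebraMapSubmonoid B (Submonoid.powers f))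
      (Localization.Away (algebraMap A B f)) := by
    rw [Algebra.algebraMapSubmonoid_powers]
    infer_instance
  have hBloc : IsLocalizedModule (Submonoid.powers f)
      (IsScalarTower.toAlgHom A B (Localization.Away (algebraMap A B f))).toLinearMap :=
    inferInstance
  have hMloc : IsLocalizedModule (Submonoid.powers f) ((LocalizedModule.mkLinearMap
      (Submonoid.powers (algebraMap A B f)) M).restrictScalars A) :=
    IsLocalizedModule.restrictScalars_powers f _
  refine he (h f ?_ ?_ ?_ ?_)
  · exact GenericFreeness.free_of_isStable
      (GenericFreeness.evalMonomials_comp_surjective hX hu hπ) hBst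
      (IsScalarTower.toAlgHom A B (Localization.Away (algebraMap A B f))).toLinearMap
  · exact GenericFreeness.free_of_isStable
      (GenericFreeness.evalMonomials_comp_surjective hx hw hg) hMst
      ((LocalizedModule.mkLinearMap (Submonoid.powers (algebraMap A B f)) M).restrictScalars A)
  · obtain ⟨I, hI, hle, htors⟩ := GenericFreeness.exists_fg_of_isStable hX hu ρ hBst
    have : Algebra.FinitePresentation A (Localization.Away (algebraMap A B f)) :=
      GenericFreeness.algebra_finitePresentation_of_torsion_ker f π hπ hI hle htors
    have : Algebra.FiniteType A (Localization.Away f) :=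
      IsLocalization.finiteType_of_monoid_fg (Submonoid.powers f) _
    exact Algebra.FinitePresentation.of_restrict_scalars_finitePresentation A _ _
  · obtain ⟨K, hK, hle, htors⟩ := GenericFreeness.exists_fg_of_isStable hx hw g hMst
    refine GenericFreeness.finitePresentation_of_torsion_ker (algebraMap A B f) g hg
      (LocalizedModule.mkLinearMap (Submonoid.powers (algebraMap A B f)) M) hK hle fun y hy => ?_
    obtain ⟨k, hk⟩ := htors y hy
    exact ⟨k, by rwa [← map_pow, algebraMap_smul]⟩
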